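/- Let T > 0, let c > 0 and set Φ(x) = c‖x‖^{−1} on ℝ² ∖ {0}, and let a : ℝ² → ℝ be smooth with 0 ≤ a ≤ 1, a ≡ 1 on B_1(0) and supp a ⊆ B_2(0); for λ > 0 set a_λ(x) = a(x/λ). Suppose θ : [0,T] × ℝ² → ℝ and u : [0,T] × ℝ² → ℝ² are smooth, there is a compact set K ⊆ ℝ² with supp θ(t, ·) ⊆ K for every t ∈ [0,T], and: (i) ∂_t θ + u·∇θ = 0 on [0,T] × ℝ²; (ii) u(t, ·) = ∇^⊥(Φ * θ(t, ·)) for every t ∈ [0,T]. Then for every λ > 0, every t ∈ [0,T], every x ∈ ℝ², and each component i ∈ {1,2}: u^i(t,x) = u^i(0,x) + ((a_λ Φ) * (∇^⊥(θ(t,·) − θ(0,·)))^i)(x) − ∫₀^t ∑_{j=1}^{2} ( ∂_j (∇^⊥((1 − a_λ)Φ))^i * (θ(s,·) u^j(s,·)) )(x) ds. -/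

import Mathlib

open MeasureTheory Metric
open scoped ENNReal

noncomputable section

/-- Abbreviation for two-dimensional Euclidean space. -/
abbrev E2 := EuclideanSpace ℝ (Fin 2)

/-- The partial derivative in the `i`-th coordinate direction. -/
def pd (i : Fin 2) (f : E2 → ℝ) : E2 → ℝ :=
  fun x => fderiv ℝ f x (EuclideanSpace.single i 1)

/-- The perpendicular gradient `∇^⊥ f = (−∂₂f, ∂₁f)` (with `0`-based indices). -/
def perpGrad (f : E2 → ℝ) : E2 → Fin 2 → ℝ :=
  fun x => ![-(pd 1 f x), pd 0 f x]

/-!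
Every component of `∇^⊥` is a directional derivative, so it passes through the convolution onto
`θ`, and `u(t) - u(0) = Φ * ∇^⊥(θ(t) - θ(0))`. Split `Φ` as `a_λ Φ + (1 - a_λ)Φ`. The second kernel
is smooth, so there the derivative can be moved onto the kernel and `θ(t) - θ(0)` written as
`∫₀ᵗ ∂ₛθ(s) ds`. As `u = ∇^⊥(Φ * θ)` is divergence free, the transport equation reads
`∂ₛθ = -∑ⱼ ∂ⱼ(θ uʲ)`, and a second integration by parts puts `∂ⱼ` on the smooth kernel.
-/

section DirectionalDerivatives

open Topology

variable {E : Type*} [NormedAddCommGroup E] [NormedSpace ℝ E]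

theorem contDiff_fderiv_apply_const {m n : WithTop ℕ∞} {f : E → ℝ} (hf : ContDiff ℝ n f)
    (hmn : m + 1 ≤ n) (v : E) : ContDiff ℝ m fun x => fderiv ℝ f x v :=
  (hf.fderiv_right hmn).clm_apply contDiff_const

theorem continuous_fderiv_apply_const {f : E → ℝ} (hf : ContDiff ℝ 1 f) (v : E) :
    Continuous fun x => fderiv ℝ f x v :=
  (hf.continuous_fderiv one_ne_zero).clm_apply continuous_const

theorem fderiv_fderiv_apply_comm {f : E → ℝ} (hf : ContDiff ℝ 2 f) (x v w : E) :
    fderiv ℝ (fun z => fderiv ℝ f z v) x w = fderiv ℝ (fun z => fderiv ℝ f z w) x v := by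
  have hdiff : DifferentiableAt ℝ (fderiv ℝ f) x :=
    (hf.fderiv_right (m := 1) (by norm_num)).differentiable one_ne_zero x
  have hsecond (v w : E) :
      fderiv ℝ (fun z => fderiv ℝ f z v) x w = fderiv ℝ (fderiv ℝ f) x w v := by
    simp [fderiv_clm_apply hdiff (differentiableAt_const v)]
  rw [hsecond, hsecond]
  exact (hf.contDiffAt.isSymmSndFDerivAt (by simp)).eq w v

theorem fderiv_comp_const_sub_apply {f : E → ℝ} {x y : E} (hf : DifferentiableAt ℝ f (x - y))
    (v : E) :
    fderiv ℝ (fun z => f (x - z)) y v = -fderiv ℝ f (x - y) v := by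
  have h := hf.hasFDerivAt.comp y ((hasFDerivAt_id (𝕜 := ℝ) y).const_sub x)
  simpa [Function.comp_def] using DFunLike.congr_fun h.fderiv v

theorem fderiv_eq_zero_of_support_subset {f : E → ℝ} {K : Set E} (hK : IsClosed K)
    (hf : Function.support f ⊆ K) {x : E} (hx : x ∉ K) : fderiv ℝ f x = 0 :=
  fderiv_of_notMem_tsupport ℝ fun h => hx (closure_minimal hf hK h)

theorem sum_fderiv_mul_of_sum_fderiv_eq_zero {ι : Type*} [Fintype ι] {e : ι → E} {ρ : E → ℝ}
    {v : E → ι → ℝ} {x : E} (hρ : DifferentiableAt ℝ ρ x)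
    (hv : ∀ j, DifferentiableAt ℝ (fun z => v z j) x)
    (hdiv : ∑ j, fderiv ℝ (fun z => v z j) x (e j) = 0) :
    ∑ j, fderiv ℝ (fun z => ρ z * v z j) x (e j) = ∑ j, v x j * fderiv ℝ ρ x (e j) :=
  calc ∑ j, fderiv ℝ (fun z => ρ z * v z j) x (e j)
      = ρ x * ∑ j, fderiv ℝ (fun z => v z j) x (e j) + ∑ j, v x j * fderiv ℝ ρ x (e j) := by
        simp [fderiv_fun_mul hρ (hv _), Finset.mul_sum, Finset.sum_add_distrib]
    _ = ∑ j, v x j * fderiv ℝ ρ x (e j) := by rw [hdiv, mul_zero, zero_add]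

theorem contDiff_one_sub_mul_of_eventually_eq_one {n : WithTop ℕ∞} {b Φ : E → ℝ} {p : E}
    (hb : ContDiff ℝ n b) (hbp : ∀ᶠ x in 𝓝 p, b x = 1) (hΦ : ∀ x ≠ p, ContDiffAt ℝ n Φ x) :
    ContDiff ℝ n fun x => (1 - b x) * Φ x := by
  refine contDiff_iff_contDiffAt.2 fun x => ?_
  rcases eq_or_ne x p with rfl | hx
  · refine (contDiffAt_const (c := (0 : ℝ))).congr_of_eventuallyEq ?_
    filter_upwards [hbp] with y hy
    rw [hy, sub_self, zero_mul]
  · exact (contDiffAt_const.sub hb.contDiffAt).mul (hΦ x hx)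

end DirectionalDerivatives

section TimeDerivative

open Set

variable {E : Type*} [NormedAddCommGroup E] [NormedSpace ℝ E] {θ : ℝ → E → ℝ}

theorem contDiff_comp_prodMk_right {n : WithTop ℕ∞}
    (hθ : ContDiff ℝ n fun q : ℝ × E => θ q.1 q.2) (t : ℝ) : ContDiff ℝ n (θ t) :=
  hθ.comp (contDiff_const.prodMk contDiff_id)

theorem hasDerivAt_comp_prodMk_left (hθ : Differentiable ℝ fun q : ℝ × E => θ q.1 q.2) (t : ℝ)
    (x : E) :
    HasDerivAt (fun s => θ s x) (fderiv ℝ (fun q : ℝ × E => θ q.1 q.2) (t, x) (1, 0)) t :=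
  (hθ (t, x)).hasFDerivAt.comp_hasDerivAt (f := fun s => (s, x)) t
    ((hasDerivAt_id t).prodMk (hasDerivAt_const t x))

theorem continuous_deriv_comp_prodMk_left (hθ : ContDiff ℝ 1 fun q : ℝ × E => θ q.1 q.2) :
    Continuous fun q : ℝ × E => deriv (fun s => θ s q.2) q.1 := by
  simp only [(hasDerivAt_comp_prodMk_left (hθ.differentiable one_ne_zero) _ _).deriv]
  exact (hθ.continuous_fderiv one_ne_zero).clm_apply continuous_const

theorem integral_mul_sub_eq_intervalIntegral_integral_mul_deriv {X : Type*} [TopologicalSpace X]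
    [T2Space X] [SecondCountableTopology X] [MeasurableSpace X] [OpensMeasurableSpace X]
    {μ : Measure X} [SFinite μ] {g : X → ℝ} {f : ℝ → X → ℝ} {K : Set X} {a b : ℝ}
    (hK : IsCompact K) (hg : IntegrableOn g K μ) (hf : ∀ s y, DifferentiableAt ℝ (f · y) s)
    (hf' : Continuous fun q : ℝ × X => deriv (f · q.2) q.1)
    (hsupp : ∀ s ∈ uIcc a b, ∀ y ∉ K, deriv (f · y) s = 0) :
    ∫ y, g y * (f b y - f a y) ∂μ = ∫ s in a..b, ∫ y, g y * deriv (f · y) s ∂μ := by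
  have hcompact : IntegrableOn (fun q : ℝ × X => g q.2 * deriv (f · q.2) q.1)
      (uIcc a b ×ˢ K) (volume.prod μ) := by
    refine IntegrableOn.mul_continuousOn ?_ hf'.continuousOn (isCompact_uIcc.prod hK)
    rw [IntegrableOn, ← Measure.prod_restrict]
    have : IsFiniteMeasure (volume.restrict (uIcc a b)) :=
      isFiniteMeasure_restrict.2 isCompact_uIcc.measure_ne_top
    exact Integrable.comp_snd hg _
  have hint : Integrable (Function.uncurry fun s y => g y * deriv (f · y) s)
      ((volume.restrict (uIoc a b)).prod μ) := by
    rw [← Measure.restrict_univ (μ := μ), Measure.prod_restrict]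
    refine hcompact.of_forall_sdiff_eq_zero (measurableSet_uIoc.prod .univ) ?_
    rintro ⟨s, y⟩ ⟨⟨hs, -⟩, hsy⟩
    have hs' : s ∈ uIcc a b := uIoc_subset_uIcc hs
    exact mul_eq_zero_of_right _ (hsupp s hs' y fun hy => hsy ⟨hs', hy⟩)
  rw [intervalIntegral_integral_swap hint]
  congr! 2 with y
  have hcont : Continuous (deriv (f · y)) := hf'.curry_left
  rw [intervalIntegral.integral_const_mul, intervalIntegral.integral_deriv_eq_sub
    (fun s _ => hf s y) (hcont.intervalIntegrable a b)]

end TimeDerivative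

section Convolution

open Set
open scoped Convolution

variable {E : Type*} [NormedAddCommGroup E] [MeasurableSpace E] [BorelSpace E] {μ : Measure E}

theorem integrable_mul_comp_sub {g f : E → ℝ} (hg : LocallyIntegrable g μ) (hf : Continuous f)
    (hfc : HasCompactSupport f) (x : E) : Integrable (fun y => g y * f (x - y)) μ :=
  hfc.convolutionExists_right (ContinuousLinearMap.mul ℝ ℝ) hg hf x

theorem integral_mul_eq_add_one_sub {Φ b f : E → ℝ} (hΦ : LocallyIntegrable Φ μ)
    (hbΦ : LocallyIntegrable (fun y => (1 - b y) * Φ y) μ) (hf : Continuous f)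
    (hfc : HasCompactSupport f) (x : E) :
    ∫ y, Φ y * f (x - y) ∂μ =
      (∫ y, b y * Φ y * f (x - y) ∂μ) + ∫ y, (1 - b y) * Φ y * f (x - y) ∂μ := by
  have hfar := integrable_mul_comp_sub hbΦ hf hfc x
  rw [← sub_eq_iff_eq_add, ← integral_sub (integrable_mul_comp_sub hΦ hf hfc x) hfar]
  congr! 2 with y
  ring

variable [NormedSpace ℝ E] [FiniteDimensional ℝ E] [μ.IsAddHaarMeasure]

theorem fderiv_integral_mul_comp_sub_apply {g f : E → ℝ} (hg : LocallyIntegrable g μ)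
    (hf : ContDiff ℝ 1 f) (hfc : HasCompactSupport f) (x v : E) :
    fderiv ℝ (fun z => ∫ y, g y * f (z - y) ∂μ) x v = ∫ y, g y * fderiv ℝ f (x - y) v ∂μ := by
  have hint := (hfc.fderiv ℝ).convolutionExists_right
    ((ContinuousLinearMap.mul ℝ ℝ).precompR E) hg (hf.continuous_fderiv one_ne_zero) x
  change fderiv ℝ (g ⋆[ContinuousLinearMap.mul ℝ ℝ, μ] f) x v = _
  rw [(hfc.hasFDerivAt_convolution_right _ hg hf x).fderiv, convolution_def,
    ContinuousLinearMap.integral_apply hint]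
  rfl

theorem fderiv_integral_mul_comp_sub_apply_sub {g f₁ f₂ : E → ℝ} (hg : LocallyIntegrable g μ)
    (hf₁ : ContDiff ℝ 1 f₁) (hf₂ : ContDiff ℝ 1 f₂) (hfc₁ : HasCompactSupport f₁)
    (hfc₂ : HasCompactSupport f₂) (x v : E) :
    fderiv ℝ (fun z => ∫ y, g y * f₁ (z - y) ∂μ) x v -
        fderiv ℝ (fun z => ∫ y, g y * f₂ (z - y) ∂μ) x v =
      ∫ y, g y * fderiv ℝ (fun z => f₁ z - f₂ z) (x - y) v ∂μ := by
  have hint {f : E → ℝ} (hf : ContDiff ℝ 1 f) (hfc : HasCompactSupport f) :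
      Integrable (fun y => g y * fderiv ℝ f (x - y) v) μ :=
    integrable_mul_comp_sub hg (continuous_fderiv_apply_const hf v)
      (hfc.fderiv_apply ℝ v) x
  rw [fderiv_integral_mul_comp_sub_apply hg hf₁ hfc₁,
    fderiv_integral_mul_comp_sub_apply hg hf₂ hfc₂, ← integral_sub (hint hf₁ hfc₁) (hint hf₂ hfc₂)]
  congr! 2 with y
  rw [fderiv_fun_sub (hf₁.differentiable one_ne_zero _) (hf₂.differentiable one_ne_zero _),
    sub_apply, mul_sub]

theorem integral_mul_fderiv_comp_sub_apply {g f : E → ℝ} (hg : ContDiff ℝ 1 g)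
    (hf : ContDiff ℝ 1 f) (hfc : HasCompactSupport f) (x v : E) :
    ∫ y, g y * fderiv ℝ f (x - y) v ∂μ = ∫ y, fderiv ℝ g y v * f (x - y) ∂μ := by
  have hfd : Differentiable ℝ f := hf.differentiable one_ne_zero
  have hg' := continuous_fderiv_apply_const hg v
  have hf' := continuous_fderiv_apply_const hf v
  have hgi : LocallyIntegrable g μ := hg.continuous.locallyIntegrable
  have hparts := integral_mul_fderiv_eq_neg_fderiv_mul_of_integrable (μ := μ) (f := g)
    (g := fun y => f (x - y)) (v := v)
    (integrable_mul_comp_sub hg'.locallyIntegrable hf.continuous hfc x)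
    (by simpa only [fderiv_comp_const_sub_apply (hfd _), mul_neg, Pi.neg_def] using
      (integrable_mul_comp_sub hgi hf' (hfc.fderiv_apply ℝ v) x).neg)
    (integrable_mul_comp_sub hgi hf.continuous hfc x)
    (fun y _ => hg.differentiable one_ne_zero y)
    (fun y _ => (hfd _).comp y (differentiableAt_id.const_sub x))
  simpa only [fderiv_comp_const_sub_apply (hfd _), mul_neg, integral_neg, neg_inj] using hparts

variable {ι : Type*} [Fintype ι] {e : ι → E}

theorem integral_mul_eq_neg_sum_of_transport {g ρ h : E → ℝ} {v : E → ι → ℝ}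
    (hg : ContDiff ℝ 1 g) (hρ : ContDiff ℝ 1 ρ) (hρc : HasCompactSupport ρ)
    (hv : ∀ j, ContDiff ℝ 1 fun z => v z j)
    (hdiv : ∀ x, ∑ j, fderiv ℝ (fun z => v z j) x (e j) = 0)
    (htransport : ∀ x, h x + ∑ j, v x j * fderiv ℝ ρ x (e j) = 0) (x : E) :
    ∫ y, g y * h (x - y) ∂μ =
      -∑ j, ∫ y, fderiv ℝ g y (e j) * (ρ (x - y) * v (x - y) j) ∂μ := by
  have hflux (j : ι) : ContDiff ℝ 1 fun z => ρ z * v z j := hρ.mul (hv j)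
  have hfluxc (j : ι) : HasCompactSupport fun z => ρ z * v z j := hρc.mul_right
  have hint (j : ι) :
      Integrable (fun y => g y * fderiv ℝ (fun z => ρ z * v z j) (x - y) (e j)) μ :=
    integrable_mul_comp_sub hg.continuous.locallyIntegrable
      (continuous_fderiv_apply_const (hflux j) (e j))
      ((hfluxc j).fderiv_apply ℝ (e j)) x
  have hconservation (z : E) : h z = -∑ j, fderiv ℝ (fun z => ρ z * v z j) z (e j) := by
    rw [sum_fderiv_mul_of_sum_fderiv_eq_zero (hρ.differentiable one_ne_zero z)
      (fun j => (hv j).differentiable one_ne_zero z) (hdiv z)]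
    exact eq_neg_of_add_eq_zero_left (htransport z)
  calc ∫ y, g y * h (x - y) ∂μ
      = -∑ j, ∫ y, g y * fderiv ℝ (fun z => ρ z * v z j) (x - y) (e j) ∂μ := by
        simp only [hconservation, mul_neg, Finset.mul_sum, integral_neg,
          integral_finsetSum _ fun j _ => hint j]
    _ = -∑ j, ∫ y, fderiv ℝ g y (e j) * (ρ (x - y) * v (x - y) j) ∂μ := by
        simp only [integral_mul_fderiv_comp_sub_apply hg (hflux _) (hfluxc _)]

variable {T : ℝ} {θ : ℝ → E → ℝ} {u : ℝ → E → ι → ℝ} {K : Set E}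

theorem integral_mul_sub_eq_neg_intervalIntegral_of_transport {g : E → ℝ} (hg : ContDiff ℝ 1 g)
    (hθ : ContDiff ℝ 1 fun q : ℝ × E => θ q.1 q.2) (hK : IsCompact K)
    (hsupp : ∀ t ∈ Icc 0 T, Function.support (θ t) ⊆ K)
    (hu : ∀ t ∈ Icc 0 T, ∀ j, ContDiff ℝ 1 fun z => u t z j)
    (hdiv : ∀ t ∈ Icc 0 T, ∀ x, ∑ j, fderiv ℝ (fun z => u t z j) x (e j) = 0)
    (htransport : ∀ t ∈ Icc 0 T, ∀ x,
      deriv (fun s => θ s x) t + ∑ j, u t x j * fderiv ℝ (θ t) x (e j) = 0)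
    {t : ℝ} (ht : t ∈ Icc 0 T) (x : E) :
    ∫ y, g y * (θ t (x - y) - θ 0 (x - y)) ∂μ =
      -∫ s in (0 : ℝ)..t, ∑ j, ∫ y, fderiv ℝ g y (e j) * (θ s (x - y) * u s (x - y) j) ∂μ := by
  have htime : uIcc 0 t ⊆ Icc 0 T := by
    rw [uIcc_of_le ht.1]
    exact Icc_subset_Icc_right ht.2
  have hθ' (s : ℝ) (hs : s ∈ Icc 0 T) (z : E) (hz : z ∉ K) : deriv (fun r => θ r z) s = 0 := by
    simpa [fderiv_eq_zero_of_support_subset hK.isClosed (hsupp s hs) hz] using htransport s hs z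
  have hK' : IsCompact ((fun y => x - y) ⁻¹' K) := (Homeomorph.subLeft x).isCompact_preimage.2 hK
  rw [integral_mul_sub_eq_intervalIntegral_integral_mul_deriv (f := fun s y => θ s (x - y)) hK'
    (hg.continuous.locallyIntegrable.integrableOn_isCompact hK')
    (fun s y => (hasDerivAt_comp_prodMk_left (hθ.differentiable one_ne_zero) s _).differentiableAt)
    ((continuous_deriv_comp_prodMk_left hθ).comp
      (continuous_fst.prodMk (continuous_const.sub continuous_snd)))
    (fun s hs y hy => hθ' s (htime hs) (x - y) hy), ← intervalIntegral.integral_neg]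
  refine intervalIntegral.integral_congr fun s hs => ?_
  have hsT := htime hs
  exact integral_mul_eq_neg_sum_of_transport (h := fun z => deriv (fun r => θ r z) s) hg
    (contDiff_comp_prodMk_right hθ s)
    (.of_support_subset_isCompact hK (hsupp s hsT)) (hu s hsT) (hdiv s hsT) (htransport s hsT) x

theorem fderiv_integral_mul_comp_sub_eq_of_transport {Φ b : E → ℝ} (hΦ : LocallyIntegrable Φ μ)
    (hbΦ : ContDiff ℝ 2 fun y => (1 - b y) * Φ y)
    (hθ : ContDiff ℝ 1 fun q : ℝ × E => θ q.1 q.2) (hK : IsCompact K)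
    (hsupp : ∀ t ∈ Icc 0 T, Function.support (θ t) ⊆ K)
    (hu : ∀ t ∈ Icc 0 T, ∀ j, ContDiff ℝ 1 fun z => u t z j)
    (hdiv : ∀ t ∈ Icc 0 T, ∀ x, ∑ j, fderiv ℝ (fun z => u t z j) x (e j) = 0)
    (htransport : ∀ t ∈ Icc 0 T, ∀ x,
      deriv (fun s => θ s x) t + ∑ j, u t x j * fderiv ℝ (θ t) x (e j) = 0)
    {t : ℝ} (ht : t ∈ Icc 0 T) (x v : E) :
    fderiv ℝ (fun z => ∫ y, Φ y * θ t (z - y) ∂μ) x v =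
      fderiv ℝ (fun z => ∫ y, Φ y * θ 0 (z - y) ∂μ) x v
        + (∫ y, b y * Φ y * fderiv ℝ (fun z => θ t z - θ 0 z) (x - y) v ∂μ)
        - ∫ s in (0 : ℝ)..t, ∑ j, ∫ y,
            fderiv ℝ (fun z => fderiv ℝ (fun w => (1 - b w) * Φ w) z v) y (e j)
              * (θ s (x - y) * u s (x - y) j) ∂μ := by
  have h0 : (0 : ℝ) ∈ Icc 0 T := ⟨le_rfl, ht.1.trans ht.2⟩
  have hslice (s : ℝ) : ContDiff ℝ 1 (θ s) := contDiff_comp_prodMk_right hθ s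
  have hcompact (s : ℝ) (hs : s ∈ Icc 0 T) : HasCompactSupport (θ s) :=
    .of_support_subset_isCompact hK (hsupp s hs)
  have hδ : ContDiff ℝ 1 fun z => θ t z - θ 0 z := (hslice t).sub (hslice 0)
  have hδc : HasCompactSupport fun z => θ t z - θ 0 z := (hcompact t ht).sub (hcompact 0 h0)
  have hincrement := fderiv_integral_mul_comp_sub_apply_sub hΦ (hslice t) (hslice 0)
    (hcompact t ht) (hcompact 0 h0) x v
  have hsplit := integral_mul_eq_add_one_sub hΦ hbΦ.continuous.locallyIntegrable
    (continuous_fderiv_apply_const hδ v) (hδc.fderiv_apply ℝ v) x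
  have hfar : ∫ y, (1 - b y) * Φ y * fderiv ℝ (fun z => θ t z - θ 0 z) (x - y) v ∂μ =
      -∫ s in (0 : ℝ)..t, ∑ j, ∫ y,
        fderiv ℝ (fun z => fderiv ℝ (fun w => (1 - b w) * Φ w) z v) y (e j)
          * (θ s (x - y) * u s (x - y) j) ∂μ := by
    rw [integral_mul_fderiv_comp_sub_apply (hbΦ.of_le one_le_two) hδ hδc]
    exact integral_mul_sub_eq_neg_intervalIntegral_of_transport
      (contDiff_fderiv_apply_const hbΦ one_add_one_eq_two.le v) hθ hK hsupp hu hdiv htransport ht x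
  linarith only [hincrement, hsplit, hfar]

end Convolution

section RieszKernel

open Topology

theorem locallyIntegrable_const_mul_norm_inv {E : Type*} [NormedAddCommGroup E] [NormedSpace ℝ E]
    [FiniteDimensional ℝ E] [MeasurableSpace E] [BorelSpace E] {μ : Measure E}
    [μ.IsAddHaarMeasure] (hdim : 1 < Module.finrank ℝ E) (c : ℝ) :
    LocallyIntegrable (fun y : E => c * ‖y‖⁻¹) μ :=
  locallyIntegrable_of_norm_le_rpow (C := |c|) (α := 1) hdim.le (mod_cast hdim)
    (.of_forall fun x => by simp [Real.rpow_neg_one])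
    (measurable_norm.inv.const_mul c).aestronglyMeasurable

theorem contDiff_one_sub_comp_smul_mul_norm_inv {E : Type*} [NormedAddCommGroup E]
    [InnerProductSpace ℝ E] {n : WithTop ℕ∞} {a : E → ℝ} (ha : ContDiff ℝ n a)
    (ha0 : ∀ᶠ x in 𝓝 0, a x = 1) (r c : ℝ) :
    ContDiff ℝ n fun x => (1 - a (r • x)) * (c * ‖x‖⁻¹) :=
  contDiff_one_sub_mul_of_eventually_eq_one (ha.comp (contDiff_const_smul r))
    (((continuous_const_smul r).tendsto' 0 0 (smul_zero r)).eventually ha0) fun _ hx =>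
      contDiffAt_const.mul ((contDiffAt_norm ℝ hx).inv (norm_ne_zero_iff.2 hx))

end RieszKernel

section PerpGrad

open Set

/-- The direction `n i` for which `(∇^⊥ f)ᵢ` is the derivative of `f` along `n i`: the standard
basis vector `i` turned by a right angle clockwise. -/
def perpDir : Fin 2 → E2 :=
  ![-EuclideanSpace.single 1 1, EuclideanSpace.single 0 1]

theorem perpGrad_apply_eq_fderiv (f : E2 → ℝ) (x : E2) (i : Fin 2) :
    perpGrad f x i = fderiv ℝ f x (perpDir i) := by
  fin_cases i <;> simp [perpGrad, pd, perpDir]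

theorem contDiff_perpGrad_apply {m n : WithTop ℕ∞} {f : E2 → ℝ} (hf : ContDiff ℝ n f)
    (hmn : m + 1 ≤ n) (i : Fin 2) : ContDiff ℝ m fun x => perpGrad f x i := by
  simpa only [perpGrad_apply_eq_fderiv] using contDiff_fderiv_apply_const hf hmn (perpDir i)

theorem sum_pd_perpGrad_eq_zero {f : E2 → ℝ} (hf : ContDiff ℝ 2 f) (x : E2) :
    ∑ j, pd j (fun z => perpGrad f z j) x = 0 := by
  simp only [Fin.sum_univ_two, pd, perpGrad_apply_eq_fderiv, perpDir, Matrix.cons_val_zero,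
    Matrix.cons_val_one, map_neg, fderiv_fun_neg, neg_apply]
  exact neg_add_eq_zero.2 (fderiv_fderiv_apply_comm hf x _ _)

theorem sqg_serfati_identity_general {T : ℝ} {Φ b : E2 → ℝ} (hΦ : LocallyIntegrable Φ)
    (hbΦ : ContDiff ℝ 2 fun y => (1 - b y) * Φ y) {θ : ℝ → E2 → ℝ} {u : ℝ → E2 → E2}
    (hθ : ContDiff ℝ 2 fun q : ℝ × E2 => θ q.1 q.2) {K : Set E2} (hK : IsCompact K)
    (hsupp : ∀ t ∈ Icc 0 T, Function.support (θ t) ⊆ K)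
    (hpde : ∀ t ∈ Icc 0 T, ∀ x,
      deriv (fun s => θ s x) t + ∑ j, u t x j * pd j (θ t) x = 0)
    (hconst : ∀ t ∈ Icc 0 T, ∀ x i,
      u t x i = perpGrad (fun z => ∫ y, Φ y * θ t (z - y)) x i)
    {t : ℝ} (ht : t ∈ Icc 0 T) (x : E2) (i : Fin 2) :
    u t x i = u 0 x i
      + (∫ y, b y * Φ y * perpGrad (fun z => θ t z - θ 0 z) (x - y) i)
      - ∫ s in (0 : ℝ)..t, ∑ j, ∫ y,
          pd j (fun z => perpGrad (fun w => (1 - b w) * Φ w) z i) y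
            * (θ s (x - y) * u s (x - y) j) := by
  have hstream (s : ℝ) (hs : s ∈ Icc 0 T) : ContDiff ℝ 2 fun z => ∫ y, Φ y * θ s (z - y) :=
    HasCompactSupport.contDiff_convolution_right (n := 2) (ContinuousLinearMap.mul ℝ ℝ)
      (.of_support_subset_isCompact hK (hsupp s hs)) hΦ (contDiff_comp_prodMk_right hθ s)
  have hu (s : ℝ) (hs : s ∈ Icc 0 T) (j : Fin 2) : ContDiff ℝ 1 fun z => u s z j := by
    simpa only [hconst s hs] using contDiff_perpGrad_apply (hstream s hs) one_add_one_eq_two.le j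
  have hdiv (s : ℝ) (hs : s ∈ Icc 0 T) (z : E2) : ∑ j, pd j (fun w => u s w j) z = 0 := by
    simpa only [hconst s hs] using sum_pd_perpGrad_eq_zero (hstream s hs) z
  rw [hconst t ht, hconst 0 ⟨le_rfl, ht.1.trans ht.2⟩]
  simp only [perpGrad_apply_eq_fderiv]
  exact fderiv_integral_mul_comp_sub_eq_of_transport hΦ hbΦ (hθ.of_le one_le_two) hK hsupp
    (u := fun s z => u s z) hu hdiv hpde ht x (perpDir i)

end PerpGrad

/-- **Lemma A.1 of the paper**: the Serfati-type identity for smooth, compactly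
supported (in space) solutions `(u, θ)` of the surface quasi-geostrophic equation
with constitutive law `u = ∇^⊥(Φ * θ)`, `Φ(x) = c/|x|`. -/
theorem sqg_serfati_identity (T c : ℝ) (hT : 0 < T) (hc : 0 < c)
    (a : E2 → ℝ) (ha : ContDiff ℝ (⊤ : ℕ∞) a)
    (ha0 : ∀ x, 0 ≤ a x) (ha1 : ∀ x, a x ≤ 1)
    (haone : ∀ x ∈ ball (0 : E2) 1, a x = 1)
    (hasupp : Function.support a ⊆ ball (0 : E2) 2)
    (θ : ℝ → E2 → ℝ) (u : ℝ → E2 → E2)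
    (hθ : ContDiff ℝ (⊤ : ℕ∞) fun q : ℝ × E2 => θ q.1 q.2)
    (hu : ContDiff ℝ (⊤ : ℕ∞) fun q : ℝ × E2 => u q.1 q.2)
    (K : Set E2) (hK : IsCompact K)
    (hsupp : ∀ t ∈ Set.Icc (0 : ℝ) T, Function.support (θ t) ⊆ K)
    -- (i) the transport equation `∂ₜθ + u·∇θ = 0`
    (hpde : ∀ t ∈ Set.Icc (0 : ℝ) T, ∀ x : E2,
      deriv (fun s => θ s x) t + ∑ j : Fin 2, u t x j * pd j (θ t) x = 0)
    -- (ii) the constitutive law `u(t) = ∇^⊥(Φ * θ(t))`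
    (hconst : ∀ t ∈ Set.Icc (0 : ℝ) T, ∀ (x : E2) (i : Fin 2),
      u t x i = perpGrad (fun z => ∫ y, c * ‖y‖⁻¹ * θ t (z - y)) x i) :
    ∀ lam : ℝ, 0 < lam → ∀ t ∈ Set.Icc (0 : ℝ) T, ∀ (x : E2) (i : Fin 2),
      u t x i
        = u 0 x i
          + (∫ y, (a (lam⁻¹ • y) * (c * ‖y‖⁻¹)) *
              perpGrad (fun z => θ t z - θ 0 z) (x - y) i)
          - ∫ s in (0 : ℝ)..t, ∑ j : Fin 2,
              ∫ y, pd j (fun z => perpGrad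
                    (fun w => (1 - a (lam⁻¹ • w)) * (c * ‖w‖⁻¹)) z i) y
                * (θ s (x - y) * u s (x - y) j)  := by
  intro lam _ t ht x i
  have hfar := contDiff_one_sub_comp_smul_mul_norm_inv (ha.of_le (m := 2) ENat.LEInfty.out)
    (Filter.eventually_of_mem (ball_mem_nhds 0 one_pos) haone) lam⁻¹ c
  exact sqg_serfati_identity_general (locallyIntegrable_const_mul_norm_inv (by simp) c) hfar
    (hθ.of_le ENat.LEInfty.out) hK hsupp hpde hconst ht x i
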